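/- For the example M = ℝ² \ ({0} × [−1,1]) with X = ∂_x, the Hausdorff quotient of the flow completion M_ℝ (the quotient by the equivalence relation generated by identifying non-separable points) is not a topological manifold. -/

import Mathlib

open Topology Filter

/-- The flow completion of `(ℝ² \ ({0} × [-1,1]), ∂ₓ)`: the plane with the strip
`ℝ × [-1, 1]` doubled, i.e. two copies of `ℝ²` glued by the identity over
`{|y| > 1}`. -/
def DoubledStripRel : ((ℝ × ℝ) ⊕ (ℝ × ℝ)) → ((ℝ × ℝ) ⊕ (ℝ × ℝ)) → Prop :=
  fun a b => ∃ p : ℝ × ℝ, 1 < |p.2| ∧ a = Sum.inl p ∧ b = Sum.inr p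

/-- The plane with the strip `ℝ × [-1, 1]` doubled. -/
def DoubledStripPlane : Type := Quot DoubledStripRel

instance : TopologicalSpace DoubledStripPlane :=
  instTopologicalSpaceQuot

/-- The Hausdorff quotient of the flow completion: the quotient by the equivalence
relation generated by identifying non-separable points. -/
def StripHausdorffQuotient : Type :=
  Quot (fun a b : DoubledStripPlane => ¬ Disjoint (𝓝 a) (𝓝 b))

instance : TopologicalSpace StripHausdorffQuotient :=
  instTopologicalSpaceQuot

open Complex Set

/-!
Near a boundary point `z` the quotient is a book with three pages: an upper half-disc glued along
its diameter to two lower ones. Write `[f]` for the class of a map `f : S → ℂˣ` in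
`[S, ℂˣ] = H¹(S; ℤ)`; it vanishes exactly when `f` has a continuous logarithm.

If `z` had a neighbourhood homeomorphic to an open subset of a normed space `E`, then it would have
arbitrarily small neighbourhoods `W` with `W \ {z}` homeomorphic to `E \ {0}`. This space is
covered by the complements of two opposite rays. They are star-shaped, and they intersect in the
complement of a line, which has at most two components, so by Mayer-Vietoris any two classes in
`H¹(W \ {z}; ℤ)` are linearly dependent.

In the book, however, each of the two lower half-discs completes the upper one to a disc. Consider
the function that is the complex coordinate on one of these discs and folds the other lower
half-disc onto the upper one. On small circles about `z` it has winding number `1` in the first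
disc and `0` in the second. The two functions obtained in this way have independent classes.
-/

section ContinuousLog

variable {X Y : Type*} [TopologicalSpace X] [TopologicalSpace Y]

/-- `g` is a continuous branch of the logarithm of `f` on `S`. -/
structure IsContinuousLogOn (g f : X → ℂ) (S : Set X) : Prop where
  continuousOn : ContinuousOn g S
  exp_eq : ∀ x ∈ S, exp (g x) = f x

/-- `f` has a continuous logarithm on `S`, that is, `f : S → ℂˣ` has trivial class in
`H¹(S; ℤ)`. -/
def HasContinuousLogOn (f : X → ℂ) (S : Set X) : Prop :=
  ∃ g, IsContinuousLogOn g f S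

/-- The classes of `f₁, f₂ : S → ℂˣ` in `H¹(S; ℤ)` are linearly dependent over `ℤ`. -/
def LogDependentOn (f₁ f₂ : X → ℂ) (S : Set X) : Prop :=
  ∃ a b : ℤ, (a ≠ 0 ∨ b ≠ 0) ∧ HasContinuousLogOn (fun x ↦ f₁ x ^ a * f₂ x ^ b) S

namespace IsContinuousLogOn

variable {f f₁ f₂ g g₁ g₂ : X → ℂ} {S T : Set X}

lemma comp (h : IsContinuousLogOn g f S) {φ : Y → X} {R : Set Y} (hφ : ContinuousOn φ R)
    (hR : MapsTo φ R S) : IsContinuousLogOn (g ∘ φ) (f ∘ φ) R :=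
  ⟨h.continuousOn.comp hφ hR, fun y hy ↦ h.exp_eq (φ y) (hR hy)⟩

lemma zpow_mul_zpow (h₁ : IsContinuousLogOn g₁ f₁ S) (h₂ : IsContinuousLogOn g₂ f₂ S) (a b : ℤ) :
    IsContinuousLogOn (fun x ↦ a * g₁ x + b * g₂ x) (fun x ↦ f₁ x ^ a * f₂ x ^ b) S where
  continuousOn := (continuousOn_const.mul h₁.continuousOn).add
    (continuousOn_const.mul h₂.continuousOn)
  exp_eq x hx := by
    rw [exp_add, exp_int_mul, exp_int_mul, h₁.exp_eq x hx, h₂.exp_eq x hx]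

lemma add_int_mul_two_pi_mul_I (h : IsContinuousLogOn g f S) (n : ℤ) :
    IsContinuousLogOn (fun x ↦ g x + n * (2 * Real.pi * I)) f S where
  continuousOn := h.continuousOn.add continuousOn_const
  exp_eq x hx := by rw [exp_add, exp_int_mul_two_pi_mul_I, mul_one, h.exp_eq x hx]

lemma hasContinuousLogOn_union (h₁ : IsContinuousLogOn g₁ f S) (h₂ : IsContinuousLogOn g₂ f T)
    (hS : IsOpen S) (hT : IsOpen T) (h : EqOn g₁ g₂ (S ∩ T)) : HasContinuousLogOn f (S ∪ T) := by
  classical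
  have eq₁ : EqOn (S.piecewise g₁ g₂) g₁ S := piecewise_eqOn S g₁ g₂
  have eq₂ : EqOn (S.piecewise g₁ g₂) g₂ T := fun x hT ↦ by
    by_cases hS : x ∈ S
    · rw [eq₁ hS, h ⟨hS, hT⟩]
    · exact piecewise_eq_of_notMem S g₁ g₂ hS
  refine ⟨S.piecewise g₁ g₂,
    (h₁.continuousOn.congr eq₁).union_of_isOpen (h₂.continuousOn.congr eq₂) hS hT, ?_⟩
  rintro x (hx | hx)
  · rw [eq₁ hx, h₁.exp_eq x hx]
  · rw [eq₂ hx, h₂.exp_eq x hx]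

lemma exists_eq_add_int_mul_two_pi_mul_I (h₁ : IsContinuousLogOn g₁ f S)
    (h₂ : IsContinuousLogOn g₂ f S) (hS : IsPreconnected S) :
    ∃ n : ℤ, ∀ x ∈ S, g₁ x = g₂ x + n * (2 * Real.pi * I) := by
  obtain rfl | ⟨x₀, hx₀⟩ := S.eq_empty_or_nonempty
  · exact ⟨0, fun x hx ↦ hx.elim⟩
  obtain ⟨n, hn⟩ := exp_eq_exp_iff_exists_int.1 ((h₁.exp_eq x₀ hx₀).trans (h₂.exp_eq x₀ hx₀).symm)
  have h₂' := h₂.add_int_mul_two_pi_mul_I n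
  exact ⟨n, isCoveringMap_exp.eqOn_of_comp_eqOn hS h₁.continuousOn h₂'.continuousOn
    (fun x hx ↦ Subtype.ext ((h₁.exp_eq x hx).trans (h₂'.exp_eq x hx).symm)) hx₀ hn⟩

end IsContinuousLogOn

lemma HasContinuousLogOn.comp {f : X → ℂ} {S : Set X} (h : HasContinuousLogOn f S) {φ : Y → X}
    {R : Set Y} (hφ : ContinuousOn φ R) (hR : MapsTo φ R S) : HasContinuousLogOn (f ∘ φ) R := by
  obtain ⟨g, hg⟩ := h
  exact ⟨g ∘ φ, hg.comp hφ hR⟩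

lemma HasContinuousLogOn.image {f : X → ℂ} {S : Set Y} {ψ : Y → X} (hψ : IsEmbedding ψ)
    (h : HasContinuousLogOn (f ∘ ψ) S) : HasContinuousLogOn f (ψ '' S) := by
  obtain ⟨g, hg⟩ := h
  have extend_apply (y : Y) : Function.extend ψ g 0 (ψ y) = g y := hψ.injective.extend_apply g 0 y
  refine ⟨Function.extend ψ g 0, ?_, ?_⟩
  · rw [hψ.isInducing.continuousOn_image_iff]
    exact hg.continuousOn.congr fun y _ ↦ extend_apply y
  · rintro _ ⟨y, hy, rfl⟩
    rw [extend_apply, hg.exp_eq y hy, Function.comp_apply]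

lemma LogDependentOn.image {f₁ f₂ : X → ℂ} {S : Set Y} {ψ : Y → X} (hψ : IsEmbedding ψ)
    (h : LogDependentOn (f₁ ∘ ψ) (f₂ ∘ ψ) S) : LogDependentOn f₁ f₂ (ψ '' S) := by
  obtain ⟨a, b, hab, hlog⟩ := h
  exact ⟨a, b, hab, hlog.image hψ⟩

lemma hasContinuousLogOn_of_mapsTo_slitPlane {f : X → ℂ} {S : Set X} (hf : ContinuousOn f S)
    (hS : MapsTo f S slitPlane) : HasContinuousLogOn f S :=
  ⟨fun x ↦ log (f x), hf.clog hS, fun _ hx ↦ exp_log (slitPlane_ne_zero (hS hx))⟩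

lemma exists_int_ne_zero_mul_add_mul_eq (k₁ l₁ k₂ l₂ : ℤ) :
    ∃ a b : ℤ, (a ≠ 0 ∨ b ≠ 0) ∧ a * k₁ + b * k₂ = a * l₁ + b * l₂ := by
  by_cases h : k₁ = l₁
  · exact ⟨1, 0, Or.inl one_ne_zero, by rw [h]; ring⟩
  · exact ⟨k₂ - l₂, l₁ - k₁, Or.inr (sub_ne_zero.2 (Ne.symm h)), by ring⟩

/- The logarithms of `fᵢ` on `A` and `B` differ by constants `kᵢ` on `C₁` and `lᵢ` on `C₂`; the
exponents are chosen such that the two differences for `f₁ ^ a * f₂ ^ b` coincide. -/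
lemma logDependentOn_union {f₁ f₂ : X → ℂ} {A B C₁ C₂ : Set X} (hA : IsOpen A) (hB : IsOpen B)
    (hC₁ : IsPreconnected C₁) (hC₂ : IsPreconnected C₂) (hC : C₁ ∪ C₂ = A ∩ B)
    (h₁A : HasContinuousLogOn f₁ A) (h₁B : HasContinuousLogOn f₁ B)
    (h₂A : HasContinuousLogOn f₂ A) (h₂B : HasContinuousLogOn f₂ B) :
    LogDependentOn f₁ f₂ (A ∪ B) := by
  obtain ⟨α₁, hα₁⟩ := h₁A
  obtain ⟨β₁, hβ₁⟩ := h₁B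
  obtain ⟨α₂, hα₂⟩ := h₂A
  obtain ⟨β₂, hβ₂⟩ := h₂B
  have exists_difference {f α β : X → ℂ} (hα : IsContinuousLogOn α f A)
      (hβ : IsContinuousLogOn β f B) {C : Set X} (hCpre : IsPreconnected C) (hCAB : C ⊆ A ∩ B) :
      ∃ n : ℤ, ∀ x ∈ C, α x = β x + n * (2 * Real.pi * I) :=
    (hα.comp continuousOn_id fun x hx ↦ (hCAB hx).1).exists_eq_add_int_mul_two_pi_mul_I
      (hβ.comp continuousOn_id fun x hx ↦ (hCAB hx).2) hCpre
  obtain ⟨k₁, hk₁⟩ := exists_difference hα₁ hβ₁ hC₁ (hC ▸ subset_union_left)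
  obtain ⟨l₁, hl₁⟩ := exists_difference hα₁ hβ₁ hC₂ (hC ▸ subset_union_right)
  obtain ⟨k₂, hk₂⟩ := exists_difference hα₂ hβ₂ hC₁ (hC ▸ subset_union_left)
  obtain ⟨l₂, hl₂⟩ := exists_difference hα₂ hβ₂ hC₂ (hC ▸ subset_union_right)
  obtain ⟨a, b, hab, hkl⟩ := exists_int_ne_zero_mul_add_mul_eq k₁ l₁ k₂ l₂
  refine ⟨a, b, hab, (hα₁.zpow_mul_zpow hα₂ a b).hasContinuousLogOn_union
    ((hβ₁.zpow_mul_zpow hβ₂ a b).add_int_mul_two_pi_mul_I (a * k₁ + b * k₂)) hA hB ?_⟩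
  intro x hx
  obtain hx | hx : x ∈ C₁ ∪ C₂ := hC ▸ hx
  · simp only [hk₁ x hx, hk₂ x hx]
    push_cast
    ring
  · simp only [hl₁ x hx, hl₂ x hx, hkl]
    push_cast
    ring

end ContinuousLog

section PuncturedSpace

variable {E : Type*} [AddCommGroup E] [Module ℝ E]

/-- The closed ray from the origin through `x`. -/
def closedRay (x : E) : Set E :=
  (fun t : ℝ ↦ t • x) '' Ici 0

lemma zero_mem_closedRay (x : E) : (0 : E) ∈ closedRay x :=
  ⟨0, self_mem_Ici, zero_smul ℝ x⟩

lemma neg_notMem_closedRay {x : E} (hx : x ≠ 0) : -x ∉ closedRay x := by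
  rintro ⟨t, ht : 0 ≤ t, h : t • x = -x⟩
  have : (1 + t) • x = 0 := by linear_combination (norm := module) h
  exact (smul_ne_zero (by positivity) hx) this

lemma starConvex_compl_closedRay {x : E} (hx : x ≠ 0) : StarConvex ℝ (-x) (closedRay x)ᶜ := by
  rintro y hy a b ha hb hab ⟨t, ht : 0 ≤ t, h : t • x = a • -x + b • y⟩
  obtain rfl | hb := hb.eq_or_lt
  · obtain rfl : a = 1 := by linarith
    exact neg_notMem_closedRay hx ⟨t, ht, by simpa using h⟩
  · refine hy ⟨b⁻¹ * (t + a), mul_nonneg (inv_nonneg.2 hb.le) (add_nonneg ht ha), ?_⟩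
    have : (t + a) • x = b • y := by linear_combination (norm := module) h
    simp only [mul_smul, this, inv_smul_smul₀ hb.ne']

lemma closedRay_neg_inter_closedRay {x : E} (hx : x ≠ 0) :
    closedRay (-x) ∩ closedRay x = {0} := by
  refine Subset.antisymm ?_ (singleton_subset_iff.2 ⟨zero_mem_closedRay _, zero_mem_closedRay _⟩)
  rintro _ ⟨⟨s, hs : 0 ≤ s, rfl⟩, t, ht : 0 ≤ t, h : t • x = s • -x⟩
  have hst : (s + t) • x = 0 := by linear_combination (norm := module) h
  have : s = 0 := by linarith [(smul_eq_zero_iff_left hx).1 hst]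
  simp [this]

lemma closedRay_neg_union_closedRay (x : E) :
    closedRay (-x) ∪ closedRay x = Submodule.span ℝ {x} := by
  ext y
  rw [SetLike.mem_coe, Submodule.mem_span_singleton]
  constructor
  · rintro (⟨t, -, rfl⟩ | ⟨t, -, rfl⟩)
    · exact ⟨-t, (neg_smul t x).trans (smul_neg t x).symm⟩
    · exact ⟨t, rfl⟩
  · rintro ⟨t, rfl⟩
    obtain ht | ht := le_total t 0
    · exact Or.inl ⟨-t, neg_nonneg.2 ht, neg_smul_neg t x⟩
    · exact Or.inr ⟨t, ht, rfl⟩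

variable [TopologicalSpace E] [IsTopologicalAddGroup E] [ContinuousSMul ℝ E]

lemma isClosed_closedRay [T2Space E] (x : E) : IsClosed (closedRay x) := by
  obtain rfl | hx := eq_or_ne x 0
  · have : closedRay (0 : E) = {0} := by simp [closedRay, nonempty_Ici.image_const]
    exact this ▸ isClosed_singleton
  · exact (isClosedEmbedding_smul_left hx).isClosedMap _ isClosed_Ici

lemma exists_isPreconnected_union_eq_compl (L : Submodule ℝ E) :
    ∃ C₁ C₂ : Set E, IsPreconnected C₁ ∧ IsPreconnected C₂ ∧ C₁ ∪ C₂ = (L : Set E)ᶜ := by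
  obtain hcodim | hcodim := lt_or_ge 1 (Module.rank ℝ (E ⧸ L))
  · have hL := (isConnected_compl_of_one_lt_codim hcodim).isPreconnected
    exact ⟨_, _, hL, hL, union_self _⟩
  · obtain ⟨u, hu⟩ : ∃ u : E ⧸ L →ₗ[ℝ] ℝ, Function.Injective u :=
      lift_rank_le_iff_exists_linearMap.1 (by simpa using hcodim)
    let v : E →ₗ[ℝ] ℝ := u ∘ₗ L.mkQ
    refine ⟨{y | v y < 0}, {y | 0 < v y}, (convex_halfSpace_lt v.isLinear 0).isPreconnected,
      (convex_halfSpace_gt v.isLinear 0).isPreconnected, ?_⟩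
    ext y
    have hv : v y = 0 ↔ y ∈ L := by
      simp only [v, LinearMap.comp_apply, map_eq_zero_iff u hu, Submodule.mkQ_apply,
        Submodule.Quotient.mk_eq_zero]
    exact lt_or_lt_iff_ne.trans hv.not

variable [LocallyConvexSpace ℝ E]

lemma hasContinuousLogOn_of_starConvex {x : E} {S : Set E} (hS : StarConvex ℝ x S) (hx : x ∈ S)
    (hSo : IsOpen S) {f : E → ℂ} (hf : ContinuousOn f S) (hf₀ : ∀ y ∈ S, f y ≠ 0) :
    HasContinuousLogOn f S := by
  have := hS.contractibleSpace ⟨x, hx⟩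
  have hsc : IsSimplyConnected S := (inferInstance : SimplyConnectedSpace S)
  obtain ⟨g, hg, hgf⟩ := exists_continuousOn_eqOn_exp_comp hsc hSo hf
    fun ⟨y, hy, h⟩ ↦ hf₀ y hy h
  exact ⟨g, hg, hgf⟩

lemma hasContinuousLogOn_compl_closedRay [T2Space E] {x : E} (hx : x ≠ 0) {f : E → ℂ}
    (hf : ContinuousOn f {0}ᶜ) (hf₀ : ∀ y ≠ 0, f y ≠ 0) :
    HasContinuousLogOn f (closedRay x)ᶜ := by
  have hsub : (closedRay x)ᶜ ⊆ {0}ᶜ :=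
    compl_subset_compl.2 (singleton_subset_iff.2 (zero_mem_closedRay x))
  exact hasContinuousLogOn_of_starConvex (starConvex_compl_closedRay hx) (neg_notMem_closedRay hx)
    (isClosed_closedRay x).isOpen_compl (hf.mono hsub) fun y hy ↦ hf₀ y (hsub hy)

theorem logDependentOn_compl_zero [T2Space E] {f₁ f₂ : E → ℂ}
    (hf₁ : ContinuousOn f₁ {0}ᶜ) (h₁ : ∀ y ≠ 0, f₁ y ≠ 0)
    (hf₂ : ContinuousOn f₂ {0}ᶜ) (h₂ : ∀ y ≠ 0, f₂ y ≠ 0) : LogDependentOn f₁ f₂ {0}ᶜ := by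
  obtain hE | hE := subsingleton_or_nontrivial E
  · exact ⟨1, 0, Or.inl one_ne_zero, 0, continuousOn_const,
      fun y hy ↦ (hy (Subsingleton.elim y 0)).elim⟩
  obtain ⟨x, hx⟩ := exists_ne (0 : E)
  have hx' : -x ≠ 0 := neg_ne_zero.2 hx
  obtain ⟨C₁, C₂, hC₁, hC₂, hC⟩ :=
    exists_isPreconnected_union_eq_compl (Submodule.span ℝ {x})
  rw [← closedRay_neg_union_closedRay x, compl_union] at hC
  rw [← closedRay_neg_inter_closedRay hx, compl_inter]
  exact logDependentOn_union (isClosed_closedRay _).isOpen_compl (isClosed_closedRay _).isOpen_compl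
    hC₁ hC₂ hC
    (hasContinuousLogOn_compl_closedRay hx' hf₁ h₁) (hasContinuousLogOn_compl_closedRay hx hf₁ h₁)
    (hasContinuousLogOn_compl_closedRay hx' hf₂ h₂) (hasContinuousLogOn_compl_closedRay hx hf₂ h₂)

end PuncturedSpace

section Chart

variable {E X : Type*} [NormedAddCommGroup E] [NormedSpace ℝ E] [TopologicalSpace X]

lemma exists_isOpenEmbedding_range_subset_of_mem_nhds {v : E} {S : Set E} (hS : S ∈ 𝓝 v) :
    ∃ φ : E → E, IsOpenEmbedding φ ∧ φ 0 = v ∧ range φ ⊆ S := by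
  obtain ⟨r, hr, hball⟩ := Metric.mem_nhds_iff.1 hS
  let e : OpenPartialHomeomorph E E := .univBall v r
  have he : e.source = univ := OpenPartialHomeomorph.univBall_source v r
  refine ⟨e, e.isOpenEmbedding he, OpenPartialHomeomorph.univBall_apply_zero v r, ?_⟩
  rw [← image_univ, ← he, e.image_source_eq_target, OpenPartialHomeomorph.univBall_target v hr]
  exact hball

lemma exists_isOpenEmbedding_range_subset {V : Set E} (hV : IsOpen V) {i : V → X}
    (hi : IsOpenEmbedding i) {v : V} {O : Set X} (hO : O ∈ 𝓝 (i v)) :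
    ∃ ψ : E → X, IsOpenEmbedding ψ ∧ ψ 0 = i v ∧ range ψ ⊆ O := by
  have hval : IsOpenEmbedding (Subtype.val : V → E) := hV.isOpenEmbedding_subtypeVal
  obtain ⟨φ, hφ, hφ₀, hφO⟩ := exists_isOpenEmbedding_range_subset_of_mem_nhds
    (hval.image_mem_nhds.2 (hi.continuous.continuousAt hO))
  have hφV (y : E) : ∃ u : V, i u ∈ O ∧ u = φ y := hφO (mem_range_self y)
  choose φ' hφ'O hφ' using hφV
  have hφ'emb : IsOpenEmbedding φ' := .of_comp _ hval (by simpa [Function.comp_def, hφ'] using hφ)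
  refine ⟨i ∘ φ', hi.comp hφ'emb, congrArg i (Subtype.ext ((hφ' 0).trans hφ₀)), ?_⟩
  rintro _ ⟨y, rfl⟩
  exact hφ'O y

theorem exists_mem_nhds_logDependentOn_diff_singleton {V : Set E} (hV : IsOpen V) {i : V → X}
    (hi : IsOpenEmbedding i) (v : V) {f₁ f₂ : X → ℂ}
    (hf₁ : Continuous f₁) (h₁ : ∀ᶠ x in 𝓝[≠] (i v), f₁ x ≠ 0)
    (hf₂ : Continuous f₂) (h₂ : ∀ᶠ x in 𝓝[≠] (i v), f₂ x ≠ 0) :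
    ∃ W ∈ 𝓝 (i v), LogDependentOn f₁ f₂ (W \ {i v}) := by
  obtain ⟨ψ, hψ, hψ₀, hne⟩ := exists_isOpenEmbedding_range_subset hV hi
    (eventually_nhdsWithin_iff.1 (h₁.and h₂))
  have hψne (y : E) (hy : y ≠ 0) : f₁ (ψ y) ≠ 0 ∧ f₂ (ψ y) ≠ 0 :=
    hne (mem_range_self y) (hψ₀ ▸ hψ.injective.ne hy)
  refine ⟨range ψ, hψ.isOpen_range.mem_nhds (hψ₀ ▸ mem_range_self 0), ?_⟩
  rw [← hψ₀, ← image_singleton, ← image_compl_eq_range_sdiff_image hψ.injective]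
  exact .image hψ.isEmbedding <| logDependentOn_compl_zero
    (hf₁.comp hψ.continuous).continuousOn (fun y hy ↦ (hψne y hy).1)
    (hf₂.comp hψ.continuous).continuousOn (fun y hy ↦ (hψne y hy).2)

end Chart

lemma isContinuousLogOn_circleMap {r : ℝ} (hr : 0 < r) :
    IsContinuousLogOn (fun t : ℝ ↦ Real.log r + t * I) (circleMap 0 r) univ where
  continuousOn := by fun_prop
  exp_eq t _ := by rw [exp_add, ← ofReal_exp, Real.exp_log hr, circleMap_zero]

lemma eq_zero_of_hasContinuousLogOn_sphere {r : ℝ} (hr : 0 < r) {φ : ℂ → ℂ} {a b : ℤ}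
    (hφ : HasContinuousLogOn φ (Metric.sphere 0 r))
    (h : HasContinuousLogOn (fun w ↦ w ^ a * φ w ^ b) (Metric.sphere 0 r)) : a = 0 := by
  obtain ⟨s, hs⟩ := hφ
  obtain ⟨k, hk⟩ := h
  have hmaps : MapsTo (circleMap 0 r) univ (Metric.sphere 0 r) :=
    fun t _ ↦ circleMap_mem_sphere 0 hr.le t
  have hcirc : ContinuousOn (circleMap 0 r) univ := (continuous_circleMap 0 r).continuousOn
  have hlog := (isContinuousLogOn_circleMap hr).zpow_mul_zpow (hs.comp hcirc hmaps) a b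
  obtain ⟨n, hn⟩ :=
    hlog.exists_eq_add_int_mul_two_pi_mul_I (hk.comp hcirc hmaps) isPreconnected_univ
  have hperiod : circleMap 0 r (2 * Real.pi) = circleMap 0 r 0 := (periodic_circleMap 0 r).eq
  have h₀ := hn 0 (mem_univ _)
  have h₁ := hn (2 * Real.pi) (mem_univ _)
  simp only [Function.comp_apply, hperiod] at h₀ h₁
  push_cast at h₀ h₁
  have : (a : ℂ) * (2 * Real.pi * I) = 0 := by linear_combination h₁ - h₀
  simpa [two_pi_I_ne_zero] using this

theorem eq_zero_of_hasContinuousLogOn_diff_singleton {X : Type*} [TopologicalSpace X]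
    {f g : X → ℂ} {ι : ℂ → X} {W : Set X} {a b : ℤ} (hι : Continuous ι) (hg : Continuous g)
    (hW : W ∈ 𝓝 (ι 0)) (hfι : ∀ᶠ w in 𝓝 0, f (ι w) = w)
    (hgι : ∀ᶠ w in 𝓝[≠] 0, g (ι w) ∈ slitPlane)
    (h : HasContinuousLogOn (fun x ↦ f x ^ a * g x ^ b) (W \ {ι 0})) : a = 0 := by
  obtain ⟨r, hr, hball⟩ := Metric.nhds_basis_closedBall.mem_iff.1
    ((hι.continuousAt.eventually_mem hW).and (hfι.and (eventually_nhdsWithin_iff.1 hgι)))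
  have hsphere {w : ℂ} (hw : w ∈ Metric.sphere 0 r) :
      ι w ∈ W ∧ f (ι w) = w ∧ (w ≠ 0 → g (ι w) ∈ slitPlane) :=
    hball (Metric.sphere_subset_closedBall hw)
  have hne {w : ℂ} (hw : w ∈ Metric.sphere 0 r) : w ≠ 0 := Metric.ne_of_mem_sphere hw hr.ne'
  have hmaps : MapsTo ι (Metric.sphere 0 r) (W \ {ι 0}) := fun w hw ↦
    ⟨(hsphere hw).1, fun h₀ : ι w = ι 0 ↦ hne hw <| by
      rw [← (hsphere hw).2.1, h₀, hfι.self_of_nhds]⟩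
  obtain ⟨k, hk⟩ := h.comp hι.continuousOn hmaps
  refine eq_zero_of_hasContinuousLogOn_sphere hr (φ := g ∘ ι) (b := b)
    (hasContinuousLogOn_of_mapsTo_slitPlane (hg.comp hι).continuousOn
      fun w hw ↦ (hsphere hw).2.2 (hne hw)) ⟨k, hk.continuousOn, fun w hw ↦ ?_⟩
  rw [hk.exp_eq w hw]
  simp only [Function.comp_apply, (hsphere hw).2.1]

/-- The map folding the left half of `ℂ` onto the right half along the imaginary axis. -/
def foldRe : C(ℂ, ℂ) where
  toFun w := ⟨|w.re|, w.im⟩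
  continuous_toFun := equivRealProdCLM.symm.continuous.comp
    (continuous_re.abs.prodMk continuous_im)

lemma foldRe_of_nonneg {w : ℂ} (hw : 0 ≤ w.re) : foldRe w = w :=
  Complex.ext (abs_of_nonneg hw) rfl

lemma foldRe_mem_slitPlane {w : ℂ} (hw : w ≠ 0) : foldRe w ∈ slitPlane := by
  rw [mem_slitPlane_iff]
  by_contra! h
  exact hw (Complex.ext (abs_nonpos_iff.1 h.1) h.2)

/-- A complex coordinate centred at each of the points `(x₀, ±1)` that maps the line through the
point to the imaginary axis and the strip `|y| < 1` to its left. -/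
def lineCoord (x₀ : ℝ) : C(ℝ × ℝ, ℂ) where
  toFun p := ⟨|p.2| - 1, p.1 - x₀⟩
  continuous_toFun := equivRealProdCLM.symm.continuous.comp
    ((continuous_snd.abs.sub continuous_const).prodMk (continuous_fst.sub continuous_const))

lemma foldRe_lineCoord (x₀ : ℝ) {p : ℝ × ℝ} (hp : 1 ≤ |p.2|) :
    foldRe (lineCoord x₀ p) = lineCoord x₀ p :=
  foldRe_of_nonneg (sub_nonneg.2 hp)

/-- For `p₀` with `|p₀.2| = 1`, the local inverse of `lineCoord p₀.1` that maps `0` to `p₀`. -/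
def lineCoordSymm (p₀ : ℝ × ℝ) : C(ℂ, ℝ × ℝ) where
  toFun w := (p₀.1 + w.im, p₀.2 * (1 + w.re))
  continuous_toFun := by fun_prop

lemma lineCoordSymm_zero (p₀ : ℝ × ℝ) : lineCoordSymm p₀ 0 = p₀ := by
  simp [lineCoordSymm]

lemma eventually_lineCoord_lineCoordSymm {p₀ : ℝ × ℝ} (hp₀ : |p₀.2| = 1) :
    ∀ᶠ w in 𝓝 0, lineCoord p₀.1 (lineCoordSymm p₀ w) = w := by
  filter_upwards [(continuous_re.tendsto 0).eventually_const_lt (show -1 < (0 : ℂ).re by simp)]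
    with w hw
  have hre : |p₀.2 * (1 + w.re)| - 1 = w.re := by
    rw [abs_mul, hp₀, abs_of_pos (by linarith)]
    ring
  exact Complex.ext hre (add_sub_cancel_left p₀.1 w.im)

lemma lineCoord_ne_zero {p p₀ : ℝ × ℝ} (hp₀ : |p₀.2| = 1) (hpos : 0 < p₀.2 * p.2) (hp : p ≠ p₀) :
    lineCoord p₀.1 p ≠ 0 := by
  intro h
  have him : p.1 - p₀.1 = 0 := congrArg im h
  have hre : |p.2| - 1 = 0 := congrArg re h
  have habs : |p.2| = |p₀.2| := by linarith
  obtain hy | hy := abs_eq_abs.1 habs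
  · exact hp (Prod.ext (sub_eq_zero.1 him) hy)
  · rw [hy] at hpos
    nlinarith [sq_nonneg p₀.2]

namespace StripHausdorffQuotient

/-- The quotient map from the two sheets to the Hausdorff quotient. -/
def mk (a : (ℝ × ℝ) ⊕ (ℝ × ℝ)) : StripHausdorffQuotient :=
  Quot.mk _ (Quot.mk DoubledStripRel a : DoubledStripPlane)

lemma continuous_mk : Continuous mk :=
  continuous_quot_mk.comp continuous_quot_mk

lemma surjective_mk : Function.Surjective mk :=
  Quot.mk_surjective.comp Quot.mk_surjective

lemma mk_inl_eq_mk_inr {p : ℝ × ℝ} (hp : 1 ≤ |p.2|) : mk (.inl p) = mk (.inr p) := by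
  let sheet (j : ℝ × ℝ → (ℝ × ℝ) ⊕ (ℝ × ℝ)) (t : ℝ) : DoubledStripPlane :=
    Quot.mk DoubledStripRel (j (p.1, t * p.2))
  have tendsto_sheet {j : ℝ × ℝ → (ℝ × ℝ) ⊕ (ℝ × ℝ)} (hj : Continuous j) :
      Tendsto (sheet j) (𝓝[>] 1) (𝓝 (Quot.mk DoubledStripRel (j p))) := by
    have hsheet : Continuous (sheet j) := continuous_quot_mk.comp (hj.comp (by fun_prop))
    simpa [sheet] using hsheet.continuousWithinAt.tendsto (x := 1) (s := Ioi 1)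
  have hglue : sheet .inl =ᶠ[𝓝[>] 1] sheet .inr := by
    filter_upwards [self_mem_nhdsWithin] with t (ht : 1 < t)
    refine Quot.sound ⟨_, ?_, rfl, rfl⟩
    rw [abs_mul, abs_of_pos (by linarith)]
    nlinarith
  exact Quot.sound fun hdisj ↦
    ((tendsto_sheet continuous_inl).congr' hglue).not_tendsto hdisj (tendsto_sheet continuous_inr)

/-- The map to a Hausdorff space induced by maps `f` and `g` on the two sheets. -/
def lift {Y : Type*} [TopologicalSpace Y] [T2Space Y] (f g : C(ℝ × ℝ, Y))
    (hfg : ∀ p : ℝ × ℝ, 1 < |p.2| → f p = g p) : C(StripHausdorffQuotient, Y) :=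
  let F : DoubledStripPlane → Y := Quot.lift (Sum.elim f g) <| by
    rintro _ _ ⟨p, hp, rfl, rfl⟩
    exact hfg p hp
  have hF : Continuous F := continuous_quot_lift _ (f.continuous.sumElim g.continuous)
  have F_eq (a b : DoubledStripPlane) (hab : ¬ Disjoint (𝓝 a) (𝓝 b)) : F a = F b := by
    by_contra hne
    exact hab ((hF.tendsto a).disjoint (disjoint_nhds_nhds.2 hne) (hF.tendsto b))
  ⟨Quot.lift F F_eq, continuous_quot_lift F_eq hF⟩

/-- The function that is the coordinate `lineCoord x₀` on the first sheet and its folding on the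
second one. -/
noncomputable def inlCoord (x₀ : ℝ) : C(StripHausdorffQuotient, ℂ) :=
  lift (lineCoord x₀) (foldRe.comp (lineCoord x₀)) fun _ hp ↦ (foldRe_lineCoord x₀ hp.le).symm

/-- The function that is the coordinate `lineCoord x₀` on the second sheet and its folding on the
first one. -/
noncomputable def inrCoord (x₀ : ℝ) : C(StripHausdorffQuotient, ℂ) :=
  lift (foldRe.comp (lineCoord x₀)) (lineCoord x₀) fun _ hp ↦ foldRe_lineCoord x₀ hp.le

/-- The second coordinate of the plane, on the Hausdorff quotient. -/
def height : C(StripHausdorffQuotient, ℝ) :=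
  lift .snd .snd fun _ _ ↦ rfl

lemma eventually_inlCoord_ne_zero_and_inrCoord_ne_zero {p₀ : ℝ × ℝ} (hp₀ : |p₀.2| = 1) :
    ∀ᶠ q in 𝓝[≠] (mk (.inl p₀)), inlCoord p₀.1 q ≠ 0 ∧ inrCoord p₀.1 q ≠ 0 := by
  have hpos : ∀ᶠ q in 𝓝 (mk (.inl p₀)), 0 < p₀.2 * height q := by
    refine (continuous_const.mul height.continuous).continuousAt.eventually_const_lt ?_
    exact mul_self_pos.2 (abs_pos.1 (hp₀ ▸ one_pos))
  rw [eventually_nhdsWithin_iff]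
  filter_upwards [hpos] with q hq hqp₀
  obtain ⟨p | p, rfl⟩ := surjective_mk q
  · have hne : lineCoord p₀.1 p ≠ 0 := lineCoord_ne_zero hp₀ hq fun h ↦ hqp₀ (h ▸ rfl)
    exact ⟨hne, slitPlane_ne_zero (foldRe_mem_slitPlane hne)⟩
  · have hne : lineCoord p₀.1 p ≠ 0 := lineCoord_ne_zero hp₀ hq fun h ↦
      hqp₀ (h ▸ (mk_inl_eq_mk_inr hp₀.ge).symm)
    exact ⟨slitPlane_ne_zero (foldRe_mem_slitPlane hne), hne⟩

lemma eventually_foldRe_lineCoord_mem_slitPlane {p₀ : ℝ × ℝ} (hp₀ : |p₀.2| = 1) :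
    ∀ᶠ w in 𝓝[≠] 0, foldRe (lineCoord p₀.1 (lineCoordSymm p₀ w)) ∈ slitPlane := by
  rw [eventually_nhdsWithin_iff]
  filter_upwards [eventually_lineCoord_lineCoordSymm hp₀] with w hw hw₀
  exact hw.symm ▸ foldRe_mem_slitPlane hw₀

theorem not_logDependentOn_inlCoord_inrCoord {p₀ : ℝ × ℝ} (hp₀ : |p₀.2| = 1)
    {W : Set StripHausdorffQuotient} (hW : W ∈ 𝓝 (mk (.inl p₀))) :
    ¬ LogDependentOn (inlCoord p₀.1) (inrCoord p₀.1) (W \ {mk (.inl p₀)}) := by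
  rintro ⟨a, b, hab, hlog⟩
  have continuous_disc {j : ℝ × ℝ → (ℝ × ℝ) ⊕ (ℝ × ℝ)} (hj : Continuous j) :
      Continuous fun w ↦ mk (j (lineCoordSymm p₀ w)) :=
    continuous_mk.comp (hj.comp (lineCoordSymm p₀).continuous)
  have ha : a = 0 := by
    refine eq_zero_of_hasContinuousLogOn_diff_singleton (f := inlCoord p₀.1)
      (continuous_disc continuous_inl) (inrCoord p₀.1).continuous ?_
      (eventually_lineCoord_lineCoordSymm hp₀) (eventually_foldRe_lineCoord_mem_slitPlane hp₀)
      (b := b) (W := W) ?_ <;>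
    rwa [lineCoordSymm_zero]
  have hb : b = 0 := by
    simp only [mul_comm (inlCoord p₀.1 _ ^ a)] at hlog
    refine eq_zero_of_hasContinuousLogOn_diff_singleton (f := inrCoord p₀.1)
      (continuous_disc continuous_inr) (inlCoord p₀.1).continuous ?_
      (eventually_lineCoord_lineCoordSymm hp₀) (eventually_foldRe_lineCoord_mem_slitPlane hp₀)
      (b := a) (W := W) ?_ <;>
    rwa [lineCoordSymm_zero, ← mk_inl_eq_mk_inr hp₀.ge]
  exact hab.elim (· ha) (· hb)

end StripHausdorffQuotient

open StripHausdorffQuotient in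
theorem stripHausdorffQuotient_not_manifold_general {E : Type*} [NormedAddCommGroup E]
    [NormedSpace ℝ E] {p : ℝ × ℝ} (hp : |p.2| = 1) :
    ¬ ∃ (U : Set StripHausdorffQuotient) (V : Set E),
      mk (.inl p) ∈ U ∧ IsOpen U ∧ IsOpen V ∧ Nonempty (U ≃ₜ V) := by
  rintro ⟨U, V, hpU, hU, hV, ⟨h⟩⟩
  let i : V → StripHausdorffQuotient := Subtype.val ∘ h.symm
  have hi : IsOpenEmbedding i := hU.isOpenEmbedding_subtypeVal.comp h.symm.isOpenEmbedding
  have hip : i (h ⟨_, hpU⟩) = mk (.inl p) := congrArg Subtype.val (h.symm_apply_apply _)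
  have hne := hip ▸ eventually_inlCoord_ne_zero_and_inrCoord_ne_zero hp
  obtain ⟨W, hW, hdep⟩ := exists_mem_nhds_logDependentOn_diff_singleton hV hi _
    (inlCoord p.1).continuous (hne.mono fun _ ↦ And.left)
    (inrCoord p.1).continuous (hne.mono fun _ ↦ And.right)
  rw [hip] at hW hdep
  exact not_logDependentOn_inlCoord_inrCoord hp hW hdep

/-- For `M = ℝ² \ ({0} × [-1,1])` with `X = ∂ₓ`, the Hausdorff quotient of the flow
completion `M_ℝ` is not a topological manifold: some point has no open neighbourhood
homeomorphic to an open subset of any `ℝⁿ`. -/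
theorem stripHausdorffQuotient_not_manifold :
    ∃ z : StripHausdorffQuotient,
      ¬ ∃ (n : ℕ) (U : Set StripHausdorffQuotient) (V : Set (Fin n → ℝ)),
        z ∈ U ∧ IsOpen U ∧ IsOpen V ∧ Nonempty (U ≃ₜ V) := by
  refine ⟨StripHausdorffQuotient.mk (.inl (0, 1)), ?_⟩
  rintro ⟨n, U, V, hchart⟩
  exact stripHausdorffQuotient_not_manifold_general (by simp) ⟨U, V, hchart⟩
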